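/- Let n, m ∈ ℕ, ε > 0, let f : ℝⁿ × ℝ → ℝⁿ be continuously differentiable in x, let B : ℝ → ℝ^{n×m}, and set D(t) := B(t)B(t)ᵀ. Suppose ψ, ρ : ℝⁿ × ℝ → ℝ are twice continuously differentiable in x and continuously differentiable in t, ψ satisfies the Hamilton–Jacobi–Bellman equation ∂ψ/∂t + (1/2)⟨∇ψ, D(t)∇ψ⟩ + ⟨∇ψ, f(x,t)⟩ = −ε⟨D(t), Hess ψ⟩, and ρ satisfies the controlled Fokker–Planck equation ∂ρ/∂t + ∇·(ρ (f(x,t) + D(t)∇ψ)) = ε⟨D(t), Hess ρ⟩, at every (x,t). Then the Hopf–Cole transform φ̂(x,t) := ρ(x,t)·exp(−ψ(x,t)/(2ε)) satisfies the forward Kolmogorov (Fokker–Planck) equation ∂φ̂/∂t = −∇·(φ̂ f(x,t)) + ε⟨D(t), Hess φ̂⟩ at every (x,t). -/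

import Mathlib

open Matrix
open scoped BigOperators

/-- Partial derivative in the `i`-th coordinate direction of a scalar function on `ℝⁿ`. -/
noncomputable def pd {n : ℕ} (i : Fin n) (f : EuclideanSpace ℝ (Fin n) → ℝ)
    (x : EuclideanSpace ℝ (Fin n)) : ℝ :=
  fderiv ℝ f x (EuclideanSpace.single i 1)

theorem pd_mul' {n : ℕ} (i : Fin n) {u v : EuclideanSpace ℝ (Fin n) → ℝ}
    {x : EuclideanSpace ℝ (Fin n)} (hu : DifferentiableAt ℝ u x) (hv : DifferentiableAt ℝ v x) :
    pd i (fun y => u y * v y) x = pd i u x * v x + u x * pd i v x := by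
  unfold pd
  rw [fderiv_fun_mul hu hv]
  simp
  ring

theorem pd_add' {n : ℕ} (i : Fin n) {u v : EuclideanSpace ℝ (Fin n) → ℝ}
    {x : EuclideanSpace ℝ (Fin n)} (hu : DifferentiableAt ℝ u x) (hv : DifferentiableAt ℝ v x) :
    pd i (fun y => u y + v y) x = pd i u x + pd i v x := by
  unfold pd
  rw [fderiv_fun_add hu hv]
  simp

theorem pd_const_mul' {n : ℕ} (i : Fin n) (c : ℝ) {u : EuclideanSpace ℝ (Fin n) → ℝ}
    {x : EuclideanSpace ℝ (Fin n)} (hu : DifferentiableAt ℝ u x) :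
    pd i (fun y => c * u y) x = c * pd i u x := by
  unfold pd
  rw [fderiv_const_mul hu]
  simp

theorem pd_sum' {n : ℕ} (i : Fin n) {u : Fin n → EuclideanSpace ℝ (Fin n) → ℝ}
    {x : EuclideanSpace ℝ (Fin n)} (hu : ∀ j, DifferentiableAt ℝ (u j) x) :
    pd i (fun y => ∑ j, u j y) x = ∑ j, pd i (u j) x := by
  unfold pd
  rw [fderiv_fun_sum (fun j _ => hu j)]
  simp

theorem pd_exp' {n : ℕ} (i : Fin n) (c : ℝ) {u : EuclideanSpace ℝ (Fin n) → ℝ}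
    {x : EuclideanSpace ℝ (Fin n)} (hu : DifferentiableAt ℝ u x) :
    pd i (fun y => Real.exp (c * u y)) x = Real.exp (c * u x) * (c * pd i u x) := by
  unfold pd
  rw [fderiv_exp (hu.const_mul c), fderiv_const_mul hu]
  simp

theorem pd_diff' {n : ℕ} (i : Fin n) {u : EuclideanSpace ℝ (Fin n) → ℝ}
    (hu : ContDiff ℝ 2 u) : Differentiable ℝ (fun y => pd i u y) := by
  unfold pd
  have h : ContDiff ℝ 1 (fderiv ℝ u) := hu.fderiv_right (by norm_num)
  exact (h.differentiable (by norm_num)).clm_apply (differentiable_const _)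

/-- the Hopf–Cole transform `φ̂ = ρ · exp(−ψ/(2ε))` of a solution pair
`(ψ, ρ)` of the HJB / controlled Fokker–Planck system satisfies the forward
Kolmogorov (Fokker–Planck) equation of the uncontrolled dynamics. -/
theorem hopfCole_forward_kolmogorov
    (n m : ℕ) (ε : ℝ) (hε : 0 < ε)
    (f : EuclideanSpace ℝ (Fin n) → ℝ → EuclideanSpace ℝ (Fin n))
    (hf : ∀ t, ContDiff ℝ 1 fun x => f x t)
    (B : ℝ → Matrix (Fin n) (Fin m) ℝ)
    (D : ℝ → Matrix (Fin n) (Fin n) ℝ)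
    (hD : ∀ t, D t = B t * (B t)ᵀ)
    (ψ ρ : EuclideanSpace ℝ (Fin n) → ℝ → ℝ)
    (hψx : ∀ t, ContDiff ℝ 2 fun x => ψ x t)
    (hψt : ∀ x, ContDiff ℝ 1 fun t => ψ x t)
    (hρx : ∀ t, ContDiff ℝ 2 fun x => ρ x t)
    (hρt : ∀ x, ContDiff ℝ 1 fun t => ρ x t)
    (hHJB : ∀ (x : EuclideanSpace ℝ (Fin n)) (t : ℝ),
      deriv (fun τ => ψ x τ) t
        + (1/2) * ∑ i, ∑ j, pd i (fun y => ψ y t) x * D t i j * pd j (fun y => ψ y t) x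
        + ∑ i, pd i (fun y => ψ y t) x * f x t i
        = -ε * ∑ i, ∑ j, D t i j * pd i (fun y => pd j (fun z => ψ z t) y) x)
    (hFPK : ∀ (x : EuclideanSpace ℝ (Fin n)) (t : ℝ),
      deriv (fun τ => ρ x τ) t
        + ∑ i, pd i (fun y => ρ y t *
            (f y t i + ∑ j, D t i j * pd j (fun z => ψ z t) y)) x
        = ε * ∑ i, ∑ j, D t i j * pd i (fun y => pd j (fun z => ρ z t) y) x)
    (φhat : EuclideanSpace ℝ (Fin n) → ℝ → ℝ)
    (hφhat : ∀ x t, φhat x t = ρ x t * Real.exp (-(ψ x t) / (2 * ε))) :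
    ∀ (x : EuclideanSpace ℝ (Fin n)) (t : ℝ),
      deriv (fun τ => φhat x τ) t
        = -(∑ i, pd i (fun y => φhat y t * f y t i) x)
          + ε * ∑ i, ∑ j, D t i j * pd i (fun y => pd j (fun z => φhat z t) y) x := by
  intro x t
  obtain ⟨c, hc⟩ : ∃ c : ℝ, c = -1 / (2 * ε) := ⟨_, rfl⟩
  have hcε : ε * c = -1 / 2 := by rw [hc]; field_simp
  have hφ : φhat = fun x t => ρ x t * Real.exp (c * ψ x t) := by
    funext y s
    rw [hφhat, hc]
    congr 2
    ring
  subst hφ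
  have hsym : ∀ i j, D t i j = D t j i := by
    intro i j
    rw [hD]
    simp only [Matrix.mul_apply, Matrix.transpose_apply]
    exact Finset.sum_congr rfl fun k _ => mul_comm _ _
  have dψ : Differentiable ℝ fun y => ψ y t := (hψx t).differentiable (by norm_num)
  have dρ : Differentiable ℝ fun y => ρ y t := (hρx t).differentiable (by norm_num)
  have dE : Differentiable ℝ fun y => Real.exp (c * ψ y t) := (dψ.const_mul c).exp
  have df : ∀ i, Differentiable ℝ fun y => f y t i := by
    intro i
    have h := (hf t).differentiable (by norm_num)
    exact (differentiable_euclidean.1 h) i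
  have dpψ : ∀ j, Differentiable ℝ fun y => pd j (fun z => ψ z t) y := fun j => pd_diff' j (hψx t)
  have dpρ : ∀ j, Differentiable ℝ fun y => pd j (fun z => ρ z t) y := fun j => pd_diff' j (hρx t)
  have ht : deriv (fun τ => ρ x τ * Real.exp (c * ψ x τ)) t
      = Real.exp (c * ψ x t) *
        (deriv (fun τ => ρ x τ) t + c * ρ x t * deriv (fun τ => ψ x τ) t) := by
    have h1 : HasDerivAt (fun τ => ρ x τ) (deriv (fun τ => ρ x τ) t) t :=
      (((hρt x).differentiable (by norm_num)) t).hasDerivAt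
    have h2 : HasDerivAt (fun τ => ψ x τ) (deriv (fun τ => ψ x τ) t) t :=
      (((hψt x).differentiable (by norm_num)) t).hasDerivAt
    have h3 := (h1.fun_mul (h2.const_mul c).exp).deriv
    rw [h3]
    ring
  have hg : ∀ j y, pd j (fun z => ρ z t * Real.exp (c * ψ z t)) y
      = Real.exp (c * ψ y t) *
        (pd j (fun z => ρ z t) y + c * (ρ y t * pd j (fun z => ψ z t) y)) := by
    intro j y
    rw [pd_mul' j (dρ y) (dE y), pd_exp' j c (dψ y)]
    ring
  have hgg : ∀ i j, pd i (fun y => pd j (fun z => ρ z t * Real.exp (c * ψ z t)) y) x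
      = Real.exp (c * ψ x t) *
        (pd i (fun y => pd j (fun z => ρ z t) y) x
          + c * (pd i (fun z => ρ z t) x * pd j (fun z => ψ z t) x)
          + c * (pd j (fun z => ρ z t) x * pd i (fun z => ψ z t) x)
          + c * (ρ x t * pd i (fun y => pd j (fun z => ψ z t) y) x)
          + c ^ 2 * (ρ x t * (pd i (fun z => ψ z t) x * pd j (fun z => ψ z t) x))) := by
    intro i j
    simp only [hg]
    have d1 : Differentiable ℝ fun y => ρ y t * pd j (fun z => ψ z t) y := dρ.fun_mul (dpψ j)
    have d2 := d1.const_mul c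
    rw [pd_mul' i (dE x) (((dpρ j).fun_add d2) x), pd_exp' i c (dψ x),
      pd_add' i (dpρ j x) (d2 x), pd_const_mul' i c (d1 x), pd_mul' i (dρ x) (dpψ j x)]
    ring
  have hdiv : ∀ i, pd i (fun y => ρ y t * Real.exp (c * ψ y t) * f y t i) x
      = Real.exp (c * ψ x t) * (pd i (fun z => ρ z t) x * f x t i
        + c * ρ x t * (pd i (fun z => ψ z t) x * f x t i)
        + ρ x t * pd i (fun y => f y t i) x) := by
    intro i
    rw [pd_mul' i ((dρ.fun_mul dE) x) (df i x), hg]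
    ring
  have hdiv2 : ∀ i, pd i (fun y => ρ y t *
            (f y t i + ∑ j, D t i j * pd j (fun z => ψ z t) y)) x
      = pd i (fun z => ρ z t) x * f x t i + ρ x t * pd i (fun y => f y t i) x
        + ∑ j, D t i j * (pd i (fun z => ρ z t) x * pd j (fun z => ψ z t) x)
        + ρ x t * ∑ j, D t i j * pd i (fun y => pd j (fun z => ψ z t) y) x := by
    intro i
    have d1 : ∀ j, Differentiable ℝ fun y => D t i j * pd j (fun z => ψ z t) y :=
      fun j => (dpψ j).const_mul _
    have d2 : Differentiable ℝ fun y => ∑ j, D t i j * pd j (fun z => ψ z t) y :=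
      Differentiable.fun_sum fun j _ => d1 j
    rw [pd_mul' i (dρ x) (((df i).fun_add d2) x), pd_add' i (df i x) (d2 x),
      pd_sum' i (fun j => d1 j x)]
    have e1 : ∀ j, pd i (fun y => D t i j * pd j (fun z => ψ z t) y) x
        = D t i j * pd i (fun y => pd j (fun z => ψ z t) y) x :=
      fun j => pd_const_mul' i _ (dpψ j x)
    have e2 : ∑ j, D t i j * (pd i (fun z => ρ z t) x * pd j (fun z => ψ z t) x)
        = pd i (fun z => ρ z t) x * ∑ j, D t i j * pd j (fun z => ψ z t) x := by
      rw [Finset.mul_sum]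
      exact Finset.sum_congr rfl fun j _ => by ring
    rw [e2]
    simp only [e1]
    ring
  have hs : ∑ i, ∑ j, D t i j * (pd j (fun z => ρ z t) x * pd i (fun z => ψ z t) x)
      = ∑ i, ∑ j, D t i j * (pd i (fun z => ρ z t) x * pd j (fun z => ψ z t) x) := by
    rw [Finset.sum_comm]
    exact Finset.sum_congr rfl fun i _ => Finset.sum_congr rfl fun j _ => by rw [hsym]
  have hq : ∑ i, ∑ j, pd i (fun y => ψ y t) x * D t i j * pd j (fun y => ψ y t) x
      = ∑ i, ∑ j, D t i j * (pd i (fun z => ψ z t) x * pd j (fun z => ψ z t) x) :=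
    Finset.sum_congr rfl fun i _ => Finset.sum_congr rfl fun j _ => by ring
  have H1 := hHJB x t
  have H2 := hFPK x t
  rw [hq] at H1
  simp only [hdiv2, Finset.sum_add_distrib, ← Finset.mul_sum] at H2
  have hS1 : ∑ i, pd i (fun y => ρ y t * Real.exp (c * ψ y t) * f y t i) x
      = Real.exp (c * ψ x t) * (∑ i, pd i (fun z => ρ z t) x * f x t i
        + c * ρ x t * ∑ i, pd i (fun z => ψ z t) x * f x t i
        + ρ x t * ∑ i, pd i (fun y => f y t i) x) := by
    simp only [hdiv, Finset.sum_add_distrib, ← Finset.mul_sum]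
  have hS2 : ∑ i, ∑ j, D t i j *
        pd i (fun y => pd j (fun z => ρ z t * Real.exp (c * ψ z t)) y) x
      = Real.exp (c * ψ x t) *
        (∑ i, ∑ j, D t i j * pd i (fun y => pd j (fun z => ρ z t) y) x
          + c * ∑ i, ∑ j, D t i j * (pd i (fun z => ρ z t) x * pd j (fun z => ψ z t) x)
          + c * ∑ i, ∑ j, D t i j * (pd j (fun z => ρ z t) x * pd i (fun z => ψ z t) x)
          + c * (ρ x t * ∑ i, ∑ j, D t i j * pd i (fun y => pd j (fun z => ψ z t) y) x)
          + c ^ 2 * (ρ x t * ∑ i, ∑ j, D t i j *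
            (pd i (fun z => ψ z t) x * pd j (fun z => ψ z t) x))) := by
    simp only [hgg, Finset.mul_sum, ← Finset.sum_add_distrib]
    exact Finset.sum_congr rfl fun i _ => Finset.sum_congr rfl fun j _ => by ring
  rw [hs] at hS2
  rw [ht, hS1, hS2]
  generalize Real.exp (c * ψ x t) = E
  generalize (∑ i, ∑ j, D t i j * pd i (fun y => pd j (fun z => ρ z t) y) x) = Rij at *
  generalize (∑ i, ∑ j, D t i j * pd i (fun y => pd j (fun z => ψ z t) y) x) = Pij at *
  generalize (∑ i, ∑ j, D t i j * (pd i (fun z => ρ z t) x * pd j (fun z => ψ z t) x)) = RP at *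
  generalize (∑ i, ∑ j, D t i j * (pd i (fun z => ψ z t) x * pd j (fun z => ψ z t) x)) = PP at *
  linear_combination E * H2 + E * c * ρ x t * H1
    - E * (2 * RP + 2 * ρ x t * Pij + c * ρ x t * PP) * hcε
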